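/- Let d ≥ 2, κ > 0, 0 < ε < 1, and let a ∈ C_c^∞(ℝ^{d−1}) be supported in {η : 1 − ε ≤ |η| ≤ 1 + ε}. Let B : (0,∞) × [0,∞) → ℝ be continuous, twice continuously differentiable in the second variable with locally bounded derivatives, and satisfy κ y ∂_y² B(μ, y) + ∂_y B(μ, y) + (μ − κ y) B(μ, y) = 0 for all μ > 0, y > 0. For j ≥ 0 define U^j(t, x_d, x′) := (2π)^{1−d} e^{i t 2^j} ∫_{ℝ^{d−1}} e^{i x′·ξ′} B(2^{2j}/|ξ′|, |ξ′| x_d) a(2^{−2j} ξ′) dξ′. Then: (i) U^j(t, x_d, x′) = 2^{2j(d−1)} U^0(2^j t, 2^{2j} x_d, 2^{2j} x′) for all t ∈ ℝ and (x_d, x′) ∈ (0,∞) × ℝ^{d−1}; and (ii) U^j is an exact solution of the acoustic wave equation ∂_t² U^j − κ x_d Δ_x U^j − ∂_{x_d} U^j = 0 on ℝ × Ω. -/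

import Mathlib

open Real MeasureTheory
open scoped RealInnerProductSpace

noncomputable section

/-- The wave packet
`U^j(t,x_d,x′) = (2π)^{1−d} e^{it2^j} ∫ e^{ix′·ξ} B(2^{2j}/|ξ|, |ξ|x_d) a(2^{−2j}ξ) dξ`. -/
def wavePacket (d : ℕ) (B : ℝ → ℝ → ℝ)
    (a : EuclideanSpace ℝ (Fin (d - 1)) → ℝ) (j : ℕ)
    (t xd : ℝ) (x' : EuclideanSpace ℝ (Fin (d - 1))) : ℂ :=
  (((2 * π) ^ ((1 : ℤ) - (d : ℤ)) : ℝ) : ℂ) *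
    Complex.exp (Complex.I * ((t * 2 ^ j : ℝ) : ℂ)) *
    ∫ ξ : EuclideanSpace ℝ (Fin (d - 1)),
      Complex.exp (Complex.I * (⟪x', ξ⟫ : ℝ)) *
        (B ((2 : ℝ) ^ (2 * j) / ‖ξ‖) (‖ξ‖ * xd) : ℂ) *
        (a (((2 : ℝ) ^ (2 * j))⁻¹ • ξ) : ℂ)

lemma ode_bound (κ α β C R M : ℝ) (hκ : 0 < κ) (hα : 0 < α) (hαβ : α < β) (hC : 0 ≤ C)
    (hM : 0 ≤ M) :
    ∃ C1 C2 : ℝ, ∀ (r : ℝ) (f f1 f2 : ℝ → ℝ), 0 ≤ r → r ≤ R →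
      (∀ y, 0 < y → HasDerivAt f (f1 y) y) → (∀ y, 0 < y → HasDerivAt f1 (f2 y) y) →
      (∀ y, 0 < y → κ * y * f2 y + f1 y + (M - κ * y * r ^ 2) * f y = 0) →
      (∀ y ∈ Set.Icc α β, |f y| ≤ C) → ∀ y ∈ Set.Icc α β, |f1 y| ≤ C1 ∧ |f2 y| ≤ C2 := by
  have hκα : 0 < κ * α := mul_pos hκ hα
  have hβ : 0 < β := hα.trans hαβ
  have hβα : 0 < β - α := sub_pos.2 hαβ
  set L := κ * β * R ^ 2 + M with hL
  set H := κ * β * (2 * C / (β - α)) + |1 - κ| * C + L * C * (β - α) with hH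
  set C1 := (H + |1 - κ| * C) / (κ * α) with hC1
  refine ⟨C1, (C1 + L * C) / (κ * α), ?_⟩
  intro r f f1 f2 hr hrR hf hf1 hode hfC
  have hpos : ∀ y ∈ Set.Icc α β, 0 < y := fun y hy => hα.trans_le hy.1
  have hL0 : 0 ≤ L := by positivity
  have hcoef : ∀ y ∈ Set.Icc α β, |(κ * y * r ^ 2 - M) * f y| ≤ L * C := by
    intro y hy
    have hy0 := hpos y hy
    rw [abs_mul]
    refine mul_le_mul ?_ (hfC y hy) (abs_nonneg _) hL0
    have h1 : κ * y * r ^ 2 ≤ κ * β * R ^ 2 := by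
      have := hy.2
      gcongr
    have h0 : 0 ≤ κ * y * r ^ 2 := by positivity
    rw [abs_le]; constructor <;> rw [hL] <;> linarith
  obtain ⟨c, hc, hcs⟩ := exists_hasDerivAt_eq_slope f f1 hαβ
    (fun y hy => (hf y (hpos y hy)).continuousAt.continuousWithinAt)
    (fun y hy => hf y (hpos y (Set.Ioo_subset_Icc_self hy)))
  have hcI := Set.Ioo_subset_Icc_self hc
  have hf1c : |f1 c| ≤ 2 * C / (β - α) := by
    rw [hcs, abs_div, abs_of_pos hβα]
    gcongr
    have h1 := hfC α ⟨le_rfl, hαβ.le⟩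
    have h2 := hfC β ⟨hαβ.le, le_rfl⟩
    calc |f β - f α| ≤ |f β| + |f α| := abs_sub _ _
      _ ≤ 2 * C := by linarith
  set h : ℝ → ℝ := fun y => κ * y * f1 y + (1 - κ) * f y with hh
  have hder : ∀ y ∈ Set.Icc α β,
      HasDerivWithinAt h ((κ * y * r ^ 2 - M) * f y) (Set.Icc α β) y := by
    intro y hy
    have hy0 := hpos y hy
    have := (((hasDerivAt_id y).const_mul κ).mul (hf1 y hy0)).add ((hf y hy0).const_mul (1 - κ))
    refine HasDerivAt.hasDerivWithinAt (this.congr_deriv ?_)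
    have := hode y hy0
    simp only [id]
    linarith
  have hf1b : ∀ y ∈ Set.Icc α β, |f1 y| ≤ C1 := by
    intro y hy
    have hy0 := hpos y hy
    have h1 := Convex.norm_image_sub_le_of_norm_hasDerivWithin_le hder hcoef
      (convex_Icc α β) hcI hy
    have h2 : ‖y - c‖ ≤ β - α := by
      rw [Real.norm_eq_abs, abs_le]; constructor <;> linarith [hy.1, hy.2, hcI.1, hcI.2]
    have h3 : |h y - h c| ≤ L * C * (β - α) :=
      h1.trans (mul_le_mul_of_nonneg_left h2 (by positivity))
    have h4 : |h c| ≤ κ * β * (2 * C / (β - α)) + |1 - κ| * C := by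
      refine (abs_add_le _ _).trans (add_le_add ?_ ?_)
      · rw [abs_mul, abs_of_pos (mul_pos hκ (hpos c hcI))]
        have := hcI.2
        gcongr
      · rw [abs_mul]; exact mul_le_mul_of_nonneg_left (hfC c hcI) (abs_nonneg _)
    have h5 : |h y| ≤ H := by
      calc |h y| = |(h y - h c) + h c| := by ring_nf
        _ ≤ |h y - h c| + |h c| := abs_add_le _ _
        _ ≤ H := by rw [hH]; linarith
    rw [hC1, le_div_iff₀ hκα]
    have h6 : |f1 y| * (κ * α) ≤ |κ * y * f1 y| := by
      rw [abs_mul, abs_of_pos (mul_pos hκ hy0), mul_comm]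
      have := hy.1
      gcongr
    have h7 : κ * y * f1 y = h y - (1 - κ) * f y := by simp only [hh]; ring
    have h8 : |h y - (1 - κ) * f y| ≤ |h y| + |(1 - κ) * f y| := abs_sub _ _
    rw [abs_mul (1 - κ)] at h8
    have h9 := mul_le_mul_of_nonneg_left (hfC y hy) (abs_nonneg (1 - κ))
    rw [h7] at h6
    linarith
  intro y hy
  have hy0 := hpos y hy
  refine ⟨hf1b y hy, ?_⟩
  rw [le_div_iff₀ hκα]
  have h6 : |f2 y| * (κ * α) ≤ |κ * y * f2 y| := by
    rw [abs_mul, abs_of_pos (mul_pos hκ hy0), mul_comm]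
    have := hy.1
    gcongr
  have h7 : κ * y * f2 y = (κ * y * r ^ 2 - M) * f y - f1 y := by linarith [hode y hy0]
  have h8 : |(κ * y * r ^ 2 - M) * f y - f1 y| ≤ _ := abs_sub _ _
  rw [h7] at h6
  linarith [hcoef y hy, hf1b y hy]

lemma deriv_under {E : Type*} [TopologicalSpace E] [T2Space E] [MeasurableSpace E] [BorelSpace E]
    (μ : Measure E) [IsFiniteMeasureOnCompacts μ] (K : Set E) (hK : IsCompact K)
    (F F' : ℝ → E → ℂ) (hint : ∀ y, 0 < y → Integrable (F y) μ)
    (hsupp : ∀ y, ∀ ξ ∉ K, F' y ξ = 0)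
    (hder : ∀ ξ, ∀ y, 0 < y → HasDerivAt (fun y => F y ξ) (F' y ξ) y)
    (hbd : ∀ α β, 0 < α → α < β → ∃ C, ∀ ξ ∈ K, ∀ y ∈ Set.Icc α β, ‖F' y ξ‖ ≤ C)
    (y : ℝ) (hy : 0 < y) :
    Integrable (F' y) μ ∧ HasDerivAt (fun y => ∫ ξ, F y ξ ∂μ) (∫ ξ, F' y ξ ∂μ) y := by
  obtain ⟨C, hC⟩ := hbd (y / 2) (2 * y) (by linarith) (by linarith)
  have hpos : ∀ z ∈ Set.Icc (y / 2) (2 * y), 0 < z := fun z hz => by linarith [hz.1]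
  refine hasDerivAt_integral_of_dominated_loc_of_deriv_le (s := Set.Icc (y / 2) (2 * y))
    (bound := K.indicator (fun _ => C)) (Icc_mem_nhds (by linarith) (by linarith)) ?_ (hint y hy)
    ?_ ?_ ?_ ?_
  · filter_upwards [lt_mem_nhds hy] with z hz using (hint z hz).aestronglyMeasurable
  · have hu : Filter.Tendsto (fun n : ℕ => 1 / ((n : ℝ) + 1)) Filter.atTop
        (nhdsWithin 0 (Set.Ioi 0)) :=
      tendsto_nhdsWithin_iff.2 ⟨tendsto_one_div_add_atTop_nhds_zero_nat,
        Filter.Eventually.of_forall fun n => by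
          show (0:ℝ) < 1 / ((n : ℝ) + 1)
          positivity⟩
    refine aestronglyMeasurable_of_tendsto_ae Filter.atTop
      (f := fun n : ℕ => fun ξ => (1 / ((n : ℝ) + 1))⁻¹ • (F (y + 1 / ((n : ℝ) + 1)) ξ - F y ξ)) ?_
      (Filter.Eventually.of_forall fun ξ => ?_)
    · intro n
      refine (((hint _ ?_).aestronglyMeasurable).sub (hint y hy).aestronglyMeasurable).const_smul
        ((1 / ((n : ℝ) + 1))⁻¹)
      positivity
    · exact ((hder ξ y hy).tendsto_slope_zero_right).comp hu
  · refine Filter.Eventually.of_forall fun ξ z hz => ?_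
    by_cases hξ : ξ ∈ K
    · rw [Set.indicator_of_mem hξ]; exact hC ξ hξ z hz
    · rw [Set.indicator_of_notMem hξ, hsupp z ξ hξ, norm_zero]
  · exact (integrable_indicator_iff hK.measurableSet).2 (integrableOn_const hK.measure_lt_top.ne)
  · exact Filter.Eventually.of_forall fun ξ z hz => hder ξ z (hpos z hz)

lemma fourier_fderiv {E : Type*} [NormedAddCommGroup E] [InnerProductSpace ℝ E]
    [FiniteDimensional ℝ E] [MeasurableSpace E] [BorelSpace E]
    (μ : Measure E) [IsFiniteMeasureOnCompacts μ] (w : E → ℂ) (hw : Continuous w)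
    (hwc : HasCompactSupport w) (z : E) :
    DifferentiableAt ℝ (fun z : E => ∫ ξ, Complex.exp (Complex.I * (⟪z, ξ⟫ : ℝ)) * w ξ ∂μ) z ∧
    ∀ v, fderiv ℝ (fun z : E => ∫ ξ, Complex.exp (Complex.I * (⟪z, ξ⟫ : ℝ)) * w ξ ∂μ) z v
      = ∫ ξ, Complex.exp (Complex.I * (⟪z, ξ⟫ : ℝ)) * (Complex.I * (⟪v, ξ⟫ : ℝ) * w ξ) ∂μ := by
  set F' : E → E → E →L[ℝ] ℂ := fun z ξ =>
    (Complex.exp (Complex.I * (⟪z, ξ⟫ : ℝ)) * Complex.I * w ξ) •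
      (Complex.ofRealCLM.comp (innerSL ℝ ξ)) with hF'
  have hF'c : Continuous (F' z) := by
    have h1 : Continuous fun ξ : E => Complex.exp (Complex.I * (⟪z, ξ⟫ : ℝ)) * Complex.I * w ξ := by
      fun_prop
    refine h1.smul ?_
    exact ((ContinuousLinearMap.compL ℝ E ℝ ℂ) Complex.ofRealCLM).continuous.comp
      (innerSL ℝ).continuous
  have hF's : HasCompactSupport (F' z) := by
    refine hwc.mono ?_
    intro ξ hξ h
    apply hξ
    ext v
    simp [hF', h]
  have hexp : ∀ z ξ : E, ‖Complex.exp (Complex.I * (⟪z, ξ⟫ : ℝ))‖ = 1 := by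
    intro z ξ
    rw [mul_comm]; exact Complex.norm_exp_ofReal_mul_I _
  have hFc : ∀ z : E, Continuous fun ξ : E => Complex.exp (Complex.I * (⟪z, ξ⟫ : ℝ)) * w ξ := by
    intro z; fun_prop
  have hd : HasFDerivAt (fun z : E => ∫ ξ, Complex.exp (Complex.I * (⟪z, ξ⟫ : ℝ)) * w ξ ∂μ)
      (∫ ξ, F' z ξ ∂μ) z := by
    refine hasFDerivAt_integral_of_dominated_of_fderiv_le (s := Set.univ)
      (bound := fun ξ => ‖w ξ‖ * ‖ξ‖) Filter.univ_mem ?_ ?_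
      hF'c.aestronglyMeasurable ?_ ?_ ?_
    · exact Filter.Eventually.of_forall fun z => (hFc z).aestronglyMeasurable
    · exact (hFc z).integrable_of_hasCompactSupport hwc.mul_left
    · refine Filter.Eventually.of_forall fun ξ z _ => ?_
      simp only [hF']
      rw [norm_smul, norm_mul, norm_mul, hexp, Complex.norm_I, one_mul, one_mul]
      gcongr
      refine (ContinuousLinearMap.opNorm_comp_le _ _).trans ?_
      rw [Complex.ofRealCLM_norm, one_mul, innerSL_apply_norm]
    · exact Continuous.integrable_of_hasCompactSupport (by fun_prop) hwc.norm.mul_right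
    · refine Filter.Eventually.of_forall fun ξ z _ => ?_
      have h1 : HasFDerivAt (fun z : E => ((⟪z, ξ⟫ : ℝ) : ℂ))
          (Complex.ofRealCLM.comp (innerSL ℝ ξ)) z := by
        have := (Complex.ofRealCLM.comp (innerSL ℝ ξ)).hasFDerivAt (x := z)
        refine this.congr_of_eventuallyEq (Filter.Eventually.of_forall fun z => ?_)
        simp [real_inner_comm]
      have h2 := ((h1.const_mul Complex.I).cexp).mul_const (w ξ)
      refine h2.congr_fderiv ?_
      ext v
      simp [hF']
      ring
  refine ⟨hd.differentiableAt, fun v => ?_⟩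
  rw [hd.fderiv, ContinuousLinearMap.integral_apply (hF'c.integrable_of_hasCompactSupport hF's)]
  refine integral_congr_ae (Filter.Eventually.of_forall fun ξ => ?_)
  simp [hF', real_inner_comm]
  ring

lemma core {n : ℕ} (κ : ℝ) (hκ : 0 < κ) (M : ℝ) (hM : 0 < M)
    (ε : ℝ) (hε : 0 < ε) (hε1 : ε < 1)
    (a : EuclideanSpace ℝ (Fin n) → ℝ)
    (ha : Continuous a) (hac : HasCompactSupport a)
    (hasupp : tsupport a ⊆
      {η : EuclideanSpace ℝ (Fin n) | 1 - ε ≤ ‖η‖ ∧ ‖η‖ ≤ 1 + ε})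
    (B : ℝ → ℝ → ℝ)
    (hBcont : ContinuousOn (fun p : ℝ × ℝ => B p.1 p.2) (Set.Ioi 0 ×ˢ Set.Ici 0))
    (hBC2 : ∀ μ : ℝ, 0 < μ → ContDiffOn ℝ 2 (B μ) (Set.Ioi 0))
    (hODE : ∀ μ : ℝ, 0 < μ → ∀ y : ℝ, 0 < y →
      κ * y * deriv (deriv (B μ)) y + deriv (B μ) y + (μ - κ * y) * B μ y = 0)
    (J : ℝ → EuclideanSpace ℝ (Fin n) → ℂ)
    (hJ : ∀ y x', J y x' = ∫ ξ : EuclideanSpace ℝ (Fin n),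
      Complex.exp (Complex.I * (⟪x', ξ⟫ : ℝ)) * (B (M / ‖ξ‖) (‖ξ‖ * y) : ℂ) * (a (M⁻¹ • ξ) : ℂ))
    (y : ℝ) (hy : 0 < y) (x' : EuclideanSpace ℝ (Fin n)) :
    (∀ z, DifferentiableAt ℝ (fun z => J y z) z) ∧
    (∀ i z, DifferentiableAt ℝ (fun z => fderiv ℝ (fun z => J y z) z
      (EuclideanSpace.single i 1)) z) ∧
    M * J y x' + ((κ * y : ℝ) : ℂ) * (deriv (fun y => deriv (fun y => J y x') y) y
      + ∑ i : Fin n, fderiv ℝ (fun z => fderiv ℝ (fun z' => J y z') z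
                    (EuclideanSpace.single i 1)) x' (EuclideanSpace.single i 1))
      + deriv (fun y => J y x') y = 0 := by
  set K : Set (EuclideanSpace ℝ (Fin n)) := {ξ | M * (1 - ε) ≤ ‖ξ‖ ∧ ‖ξ‖ ≤ M * (1 + ε)} with hKdef
  have hKcl : IsClosed K := (isClosed_le continuous_const continuous_norm).inter
    (isClosed_le continuous_norm continuous_const)
  have hKc : IsCompact K := by
    refine Metric.isCompact_of_isClosed_isBounded hKcl ?_
    refine (Metric.isBounded_closedBall (x := (0:(EuclideanSpace ℝ (Fin n)))) (r := M * (1 + ε))).subset fun ξ hξ => ?_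
    simpa using hξ.2
  have hKpos : ∀ ξ ∈ K, 0 < ‖ξ‖ := fun ξ hξ =>
    lt_of_lt_of_le (mul_pos hM (by linarith)) hξ.1
  set aj : (EuclideanSpace ℝ (Fin n)) → ℝ := fun ξ => a (M⁻¹ • ξ) with haj
  have hajc : Continuous aj := ha.comp (continuous_const_smul _)
  have haj0 : ∀ ξ, ξ ∉ K → aj ξ = 0 := by
    intro ξ hξ
    by_contra h
    apply hξ
    have h1 := hasupp (subset_tsupport a h)
    simp only [Set.mem_ofPred_eq, norm_smul, norm_inv, Real.norm_eq_abs, abs_of_pos hM] at h1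
    rw [inv_mul_eq_div, le_div_iff₀ hM, div_le_iff₀ hM] at h1
    exact ⟨by linarith [h1.1], by linarith [h1.2]⟩
  set f : (EuclideanSpace ℝ (Fin n)) → ℝ → ℝ := fun ξ y => B (M / ‖ξ‖) (‖ξ‖ * y) with hf
  set f1 : (EuclideanSpace ℝ (Fin n)) → ℝ → ℝ := fun ξ y => ‖ξ‖ * deriv (B (M / ‖ξ‖)) (‖ξ‖ * y) with hf1
  set f2 : (EuclideanSpace ℝ (Fin n)) → ℝ → ℝ := fun ξ y => ‖ξ‖ ^ 2 * deriv (deriv (B (M / ‖ξ‖))) (‖ξ‖ * y) with hf2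
  have hd1 : ∀ ξ, 0 < ‖ξ‖ → ∀ y, 0 < y → HasDerivAt (f ξ) (f1 ξ y) y := by
    intro ξ hξ y hy
    have h1 : DifferentiableAt ℝ (B (M / ‖ξ‖)) (‖ξ‖ * y) :=
      ((hBC2 _ (div_pos hM hξ)).differentiableOn (by norm_num)).differentiableAt
        (Ioi_mem_nhds (mul_pos hξ hy))
    have h2 := HasDerivAt.comp y h1.hasDerivAt ((hasDerivAt_id y).const_mul ‖ξ‖)
    exact h2.congr_deriv (by simp only [hf1]; ring)
  have hd2 : ∀ ξ, 0 < ‖ξ‖ → ∀ y, 0 < y → HasDerivAt (f1 ξ) (f2 ξ y) y := by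
    intro ξ hξ y hy
    have h0 : ContDiffOn ℝ 1 (deriv (B (M / ‖ξ‖))) (Set.Ioi 0) :=
      (hBC2 _ (div_pos hM hξ)).deriv_of_isOpen isOpen_Ioi (by norm_num)
    have h1 : DifferentiableAt ℝ (deriv (B (M / ‖ξ‖))) (‖ξ‖ * y) :=
      (h0.differentiableOn (by norm_num)).differentiableAt
        (Ioi_mem_nhds (mul_pos hξ hy))
    have h2 := (HasDerivAt.comp y h1.hasDerivAt ((hasDerivAt_id y).const_mul ‖ξ‖)).const_mul ‖ξ‖
    exact h2.congr_deriv (by simp only [hf2]; ring)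
  have hode : ∀ ξ, 0 < ‖ξ‖ → ∀ y, 0 < y →
      κ * y * f2 ξ y + f1 ξ y + (M - κ * y * ‖ξ‖ ^ 2) * f ξ y = 0 := by
    intro ξ hξ y hy
    have h1 := hODE _ (div_pos hM hξ) _ (mul_pos hξ hy)
    have h2 : M = ‖ξ‖ * (M / ‖ξ‖) := by field_simp
    have h3 : κ * y * f2 ξ y + f1 ξ y + (‖ξ‖ * (M / ‖ξ‖) - κ * y * ‖ξ‖ ^ 2) * f ξ y = 0 := by
      simp only [hf, hf1, hf2]
      linear_combination ‖ξ‖ * h1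
    rwa [← h2] at h3
  -- joint continuity
  have hfc : ContinuousOn (fun p : (EuclideanSpace ℝ (Fin n)) × ℝ => f p.1 p.2) ({0}ᶜ ×ˢ Set.Ioi 0) := by
    refine hBcont.comp (f := fun p : (EuclideanSpace ℝ (Fin n)) × ℝ => (M / ‖p.1‖, ‖p.1‖ * p.2)) ?_ ?_
    · refine ContinuousOn.prodMk (continuousOn_const.div (by fun_prop) ?_) (by fun_prop)
      rintro p ⟨hp, -⟩
      exact norm_ne_zero_iff.2 hp
    · rintro p ⟨hp, hp2⟩
      have hp' : 0 < ‖p.1‖ := norm_pos_iff.2 hp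
      exact ⟨div_pos hM hp', (mul_pos hp' hp2).le⟩
  obtain ⟨A, hA⟩ := hajc.bounded_above_of_compact_support
    (HasCompactSupport.intro hKc haj0)
  have hA0 : 0 ≤ A := (norm_nonneg _).trans (hA 0)
  have hbounds : ∀ α β, 0 < α → α < β → ∃ C1 C2 : ℝ, ∀ ξ ∈ K, ∀ y ∈ Set.Icc α β,
      |f1 ξ y| ≤ C1 ∧ |f2 ξ y| ≤ C2 := by
    intro α β hα hαβ
    obtain ⟨C, hC⟩ := (hKc.prod (isCompact_Icc (a := α) (b := β))).exists_bound_of_continuousOn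
      (hfc.mono (Set.prod_mono (fun ξ hξ => norm_pos_iff.1 (hKpos ξ hξ))
        (fun y hy => hα.trans_le hy.1)))
    obtain ⟨C1, C2, h⟩ := ode_bound κ α β (max C 0) (M * (1 + ε)) M hκ hα hαβ
      (le_max_right _ _) hM.le
    refine ⟨C1, C2, fun ξ hξ => h ‖ξ‖ (f ξ) (f1 ξ) (f2 ξ) (norm_nonneg _) hξ.2
      (hd1 ξ (hKpos ξ hξ)) (hd2 ξ (hKpos ξ hξ)) (hode ξ (hKpos ξ hξ)) ?_⟩
    intro y hy
    exact (hC (ξ, y) ⟨hξ, hy⟩).trans (le_max_left _ _)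
  -- weights
  have hwc : ∀ y, 0 < y → Continuous fun ξ : (EuclideanSpace ℝ (Fin n)) => ((f ξ y : ℝ) : ℂ) * (aj ξ : ℂ) := by
    intro y hy
    refine ContinuousOn.continuous_of_tsupport_subset (s := {0}ᶜ) ?_ isOpen_compl_singleton ?_
    · refine ContinuousOn.mul ?_ (by fun_prop)
      refine Complex.continuous_ofReal.comp_continuousOn ?_
      exact hfc.comp (f := fun ξ : (EuclideanSpace ℝ (Fin n)) => (ξ, y)) (by fun_prop) (fun ξ hξ => ⟨hξ, hy⟩)
    · refine (closure_minimal (t := K) ?_ hKcl).trans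
        (fun ξ hξ => norm_pos_iff.1 (hKpos ξ hξ))
      intro ξ hξ
      by_contra h
      exact hξ (by simp [haj0 ξ h])
  have hws : ∀ y, HasCompactSupport fun ξ : (EuclideanSpace ℝ (Fin n)) => ((f ξ y : ℝ) : ℂ) * (aj ξ : ℂ) := by
    intro y
    exact HasCompactSupport.intro hKc fun ξ hξ => by simp [haj0 ξ hξ]
  have hexp : ∀ z ξ : (EuclideanSpace ℝ (Fin n)), ‖Complex.exp (Complex.I * (⟪z, ξ⟫ : ℝ))‖ = 1 := by
    intro z ξ
    rw [mul_comm]; exact Complex.norm_exp_ofReal_mul_I _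
  set F : ((EuclideanSpace ℝ (Fin n)) → ℝ → ℝ) → ℝ → (EuclideanSpace ℝ (Fin n)) → ℂ := fun g y ξ =>
    Complex.exp (Complex.I * (⟪x', ξ⟫ : ℝ)) * ((g ξ y : ℂ) * (aj ξ : ℂ)) with hF
  have hFsupp : ∀ g y, ∀ ξ ∉ K, F g y ξ = 0 := fun g y ξ hξ => by simp [hF, haj0 ξ hξ]
  have hFder : ∀ g g' : (EuclideanSpace ℝ (Fin n)) → ℝ → ℝ,
      (∀ ξ, 0 < ‖ξ‖ → ∀ y, 0 < y → HasDerivAt (g ξ) (g' ξ y) y) →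
      ∀ ξ, ∀ y, 0 < y → HasDerivAt (fun y => F g y ξ) (F g' y ξ) y := by
    intro g g' hg ξ y hy
    by_cases hξ : ξ ∈ K
    · exact (((hg ξ (hKpos ξ hξ) y hy).ofReal_comp).mul_const _).const_mul _
    · simp only [hFsupp _ _ ξ hξ]
      exact hasDerivAt_const _ _
  have hFbd : ∀ (g : (EuclideanSpace ℝ (Fin n)) → ℝ → ℝ) (ξ : (EuclideanSpace ℝ (Fin n))) (y C : ℝ), |g ξ y| ≤ C → ‖F g y ξ‖ ≤ C * A := by
    intro g ξ y C h
    simp only [hF]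
    rw [norm_mul, hexp, one_mul, norm_mul, Complex.norm_real, Complex.norm_real]
    exact mul_le_mul h (hA ξ) (norm_nonneg _) ((abs_nonneg _).trans h)
  have hint0 : ∀ y, 0 < y → Integrable (F f y) := by
    intro y hy
    refine Continuous.integrable_of_hasCompactSupport ?_ ((hws y).mul_left)
    exact Continuous.mul (by fun_prop) (hwc y hy)
  have hD1 := deriv_under volume K hKc (F f) (F f1) hint0 (hFsupp f1) (hFder f f1 hd1)
    (by
      intro α β hα hαβ
      obtain ⟨C1, C2, h⟩ := hbounds α β hα hαβ
      exact ⟨C1 * A, fun ξ hξ y hy => hFbd _ _ _ _ (h ξ hξ y hy).1⟩)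
  have hD2 := deriv_under volume K hKc (F f1) (F f2) (fun y hy => (hD1 y hy).1)
    (hFsupp f2) (hFder f1 f2 hd2)
    (by
      intro α β hα hαβ
      obtain ⟨C1, C2, h⟩ := hbounds α β hα hαβ
      exact ⟨C2 * A, fun ξ hξ y hy => hFbd _ _ _ _ (h ξ hξ y hy).2⟩)
  have hJ' : ∀ y z, J y z = ∫ ξ : (EuclideanSpace ℝ (Fin n)), Complex.exp (Complex.I * (⟪z, ξ⟫ : ℝ)) *
      ((f ξ y : ℂ) * (aj ξ : ℂ)) := by
    intro y z
    rw [hJ]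
    simp only [mul_assoc, hf, haj]
  have hJy : (fun y => J y x') = fun y => ∫ ξ, F f y ξ := by
    funext y; exact hJ' y x'
  have e1 : ∀ y, 0 < y → deriv (fun y => J y x') y = ∫ ξ, F f1 y ξ := by
    intro y hy
    rw [hJy]; exact (hD1 y hy).2.deriv
  have e2 : deriv (fun y => deriv (fun y => J y x') y) y = ∫ ξ, F f2 y ξ := by
    rw [← (hD2 y hy).2.deriv]
    refine Filter.EventuallyEq.deriv_eq ?_
    filter_upwards [lt_mem_nhds hy] with z hz using e1 z hz
  -- tangential derivatives
  have hJz : (fun z => J y z) = fun z => ∫ ξ : (EuclideanSpace ℝ (Fin n)), Complex.exp (Complex.I * (⟪z, ξ⟫ : ℝ)) *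
      ((f ξ y : ℂ) * (aj ξ : ℂ)) := by
    funext z; exact hJ' y z
  have t1 := fourier_fderiv volume _ (hwc y hy) (hws y)
  have hw2c : ∀ v : (EuclideanSpace ℝ (Fin n)), Continuous fun ξ : (EuclideanSpace ℝ (Fin n)) =>
      Complex.I * (⟪v, ξ⟫ : ℝ) * (((f ξ y : ℝ) : ℂ) * (aj ξ : ℂ)) := by
    intro v
    exact Continuous.mul (by fun_prop) (hwc y hy)
  have t2 := fun v : (EuclideanSpace ℝ (Fin n)) => fourier_fderiv volume _ (hw2c v) (hws y).mul_left
  have hz1 : ∀ v : (EuclideanSpace ℝ (Fin n)), (fun z => fderiv ℝ (fun z => J y z) z v) = fun z => ∫ ξ : (EuclideanSpace ℝ (Fin n)),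
      Complex.exp (Complex.I * (⟪z, ξ⟫ : ℝ)) *
        (Complex.I * (⟪v, ξ⟫ : ℝ) * (((f ξ y : ℝ) : ℂ) * (aj ξ : ℂ))) := by
    intro v; funext z
    rw [hJz]; exact (t1 z).2 v
  refine ⟨fun z => ?_, fun i z => ?_, ?_⟩
  · rw [hJz]; exact (t1 z).1
  · rw [hz1]; exact (t2 _ z).1
  rw [e2, e1 y hy, hJ' y x']
  have hint2 : ∀ v : (EuclideanSpace ℝ (Fin n)), Integrable fun ξ : (EuclideanSpace ℝ (Fin n)) => Complex.exp (Complex.I * (⟪x', ξ⟫ : ℝ)) *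
      (Complex.I * (⟪v, ξ⟫ : ℝ) * (Complex.I * (⟪v, ξ⟫ : ℝ) *
        (((f ξ y : ℝ) : ℂ) * (aj ξ : ℂ)))) := by
    intro v
    refine Continuous.integrable_of_hasCompactSupport ?_ ((hws y).mul_left.mul_left.mul_left)
    exact Continuous.mul (by fun_prop) (Continuous.mul (by fun_prop) (hw2c v))
  have hsum : ∑ i : Fin n, fderiv ℝ (fun z => fderiv ℝ (fun z' => J y z') z
      (EuclideanSpace.single i 1)) x' (EuclideanSpace.single i 1)
      = ∫ ξ : (EuclideanSpace ℝ (Fin n)), -((‖ξ‖ ^ 2 : ℝ) : ℂ) * F f y ξ := by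
    have : ∀ i : Fin n, fderiv ℝ (fun z => fderiv ℝ (fun z' => J y z') z
      (EuclideanSpace.single i 1)) x' (EuclideanSpace.single i 1) =
        ∫ ξ : EuclideanSpace ℝ (Fin n), Complex.exp (Complex.I * (⟪x', ξ⟫ : ℝ)) *
      (Complex.I * (⟪(EuclideanSpace.single i 1 : EuclideanSpace ℝ (Fin n)), ξ⟫ : ℝ) *
      (Complex.I * (⟪(EuclideanSpace.single i 1 : EuclideanSpace ℝ (Fin n)), ξ⟫ : ℝ) *
        (((f ξ y : ℝ) : ℂ) * (aj ξ : ℂ)))) := by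
      intro i
      rw [hz1]
      exact (t2 (EuclideanSpace.single i 1) x').2 (EuclideanSpace.single i 1)
    rw [Finset.sum_congr rfl fun i _ => this i, ← integral_finsetSum _ fun i _ => hint2 _]
    refine integral_congr_ae (Filter.Eventually.of_forall fun ξ => ?_)
    simp only [hF]
    rw [EuclideanSpace.real_norm_sq_eq]
    push_cast
    rw [← Finset.sum_neg_distrib, Finset.sum_mul]
    refine Finset.sum_congr rfl fun i _ => ?_
    rw [EuclideanSpace.inner_single_left]
    simp only [map_one, one_mul]
    linear_combination (Complex.exp (Complex.I * (⟪x', ξ⟫ : ℝ)) * (ξ i : ℂ) ^ 2 *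
      (((f ξ y : ℝ) : ℂ) * (aj ξ : ℂ))) * Complex.I_sq
  rw [hsum]
  have hint3 : Integrable fun ξ : (EuclideanSpace ℝ (Fin n)) => -((‖ξ‖ ^ 2 : ℝ) : ℂ) * F f y ξ := by
    refine Continuous.integrable_of_hasCompactSupport ?_ ((hws y).mul_left.mul_left)
    exact Continuous.mul (by fun_prop) (Continuous.mul (by fun_prop) (hwc y hy))
  have i0 := hint0 y hy
  have i1 := (hD1 y hy).1
  have i2 := (hD2 y hy).1
  change (M : ℂ) * (∫ ξ, F f y ξ) + _ + _ = 0
  have i3 : Integrable fun ξ : EuclideanSpace ℝ (Fin n) =>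
      ((κ * y : ℝ) : ℂ) * (F f2 y ξ + -((‖ξ‖ ^ 2 : ℝ) : ℂ) * F f y ξ) :=
    (i2.add hint3).const_mul _
  have i4 : Integrable fun ξ : EuclideanSpace ℝ (Fin n) => (M : ℂ) * F f y ξ := i0.const_mul _
  have i5 : Integrable fun ξ : EuclideanSpace ℝ (Fin n) => (M : ℂ) * F f y ξ +
      ((κ * y : ℝ) : ℂ) * (F f2 y ξ + -((‖ξ‖ ^ 2 : ℝ) : ℂ) * F f y ξ) := i4.add i3
  rw [← integral_add i2 hint3, ← integral_const_mul, ← integral_const_mul,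
    ← integral_add i4 i3, ← integral_add i5 i1]
  rw [← integral_zero (EuclideanSpace ℝ (Fin n)) ℂ (μ := volume)]
  refine integral_congr_ae (Filter.Eventually.of_forall fun ξ => ?_)
  by_cases hξ : ξ ∈ K
  · have h := congrArg (fun r : ℝ => (r : ℂ)) (hode ξ (hKpos ξ hξ) y hy)
    simp only [hF]
    push_cast at h ⊢
    linear_combination (Complex.exp (Complex.I * (⟪x', ξ⟫ : ℝ)) * (aj ξ : ℂ)) * h
  · simp [hFsupp _ _ ξ hξ]

/-- the wave packets `U^j` rescale onto `U^0` and are exact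
solutions of the acoustic wave equation `∂_t²U − κx_dΔU − ∂_{x_d}U = 0`. -/
theorem stmt16 {d : ℕ} (hd : 2 ≤ d) (κ : ℝ) (hκ : 0 < κ)
    (ε : ℝ) (hε : 0 < ε) (hε1 : ε < 1)
    (a : EuclideanSpace ℝ (Fin (d - 1)) → ℝ)
    (ha : ContDiff ℝ (⊤ : ℕ∞) a) (hac : HasCompactSupport a)
    (hasupp : tsupport a ⊆
      {η : EuclideanSpace ℝ (Fin (d - 1)) | 1 - ε ≤ ‖η‖ ∧ ‖η‖ ≤ 1 + ε})
    (B : ℝ → ℝ → ℝ)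
    (hBcont : ContinuousOn (fun p : ℝ × ℝ => B p.1 p.2) (Set.Ioi 0 ×ˢ Set.Ici 0))
    (hBC2 : ∀ μ : ℝ, 0 < μ → ContDiffOn ℝ 2 (B μ) (Set.Ioi 0))
    (hBloc : ∀ μ : ℝ, 0 < μ → ∀ K : Set ℝ, IsCompact K → K ⊆ Set.Ici 0 →
      ∃ C : ℝ, ∀ y ∈ K ∩ Set.Ioi 0,
        |B μ y| + |deriv (B μ) y| + |deriv (deriv (B μ)) y| ≤ C)
    (hODE : ∀ μ : ℝ, 0 < μ → ∀ y : ℝ, 0 < y →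
      κ * y * deriv (deriv (B μ)) y + deriv (B μ) y + (μ - κ * y) * B μ y = 0) :
    (∀ j : ℕ, ∀ t xd : ℝ, 0 < xd → ∀ x' : EuclideanSpace ℝ (Fin (d - 1)),
      wavePacket d B a j t xd x'
        = (((2 : ℝ) ^ (2 * j * (d - 1)) : ℝ) : ℂ) *
            wavePacket d B a 0 (2 ^ j * t) ((2 : ℝ) ^ (2 * j) * xd)
              (((2 : ℝ) ^ (2 * j)) • x')) ∧
    (∀ j : ℕ, ∀ t xd : ℝ, 0 < xd → ∀ x' : EuclideanSpace ℝ (Fin (d - 1)),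
      deriv (fun s => deriv (fun s' => wavePacket d B a j s' xd x') s) t
        - ((κ * xd : ℝ) : ℂ) *
            (deriv (fun y => deriv (fun y' => wavePacket d B a j t y' x') y) xd
              + ∑ i : Fin (d - 1),
                  fderiv ℝ (fun z => fderiv ℝ
                    (fun z' => wavePacket d B a j t xd z') z
                    (EuclideanSpace.single i 1)) x' (EuclideanSpace.single i 1))
        - deriv (fun y => wavePacket d B a j t y x') xd = 0) := by
  constructor
  · intro j t xd hxd x'
    have hM : (0:ℝ) < 2 ^ (2 * j) := by positivity
    have h := Measure.integral_comp_smul (volume : Measure (EuclideanSpace ℝ (Fin (d - 1))))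
      (fun ξ : EuclideanSpace ℝ (Fin (d - 1)) => Complex.exp (Complex.I * (⟪x', ξ⟫ : ℝ)) *
        (B ((2 : ℝ) ^ (2 * j) / ‖ξ‖) (‖ξ‖ * xd) : ℂ) *
        (a (((2 : ℝ) ^ (2 * j))⁻¹ • ξ) : ℂ)) ((2:ℝ) ^ (2 * j))
    have h2 : ∀ ξ : EuclideanSpace ℝ (Fin (d - 1)),
        Complex.exp (Complex.I * (⟪x', ((2:ℝ) ^ (2 * j)) • ξ⟫ : ℝ)) *
        (B ((2 : ℝ) ^ (2 * j) / ‖((2:ℝ) ^ (2 * j)) • ξ‖) (‖((2:ℝ) ^ (2 * j)) • ξ‖ * xd) : ℂ) *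
        (a (((2 : ℝ) ^ (2 * j))⁻¹ • ((2:ℝ) ^ (2 * j)) • ξ) : ℂ) =
        Complex.exp (Complex.I * (⟪((2:ℝ) ^ (2 * j)) • x', ξ⟫ : ℝ)) *
        (B ((2 : ℝ) ^ (2 * 0) / ‖ξ‖) (‖ξ‖ * ((2:ℝ) ^ (2 * j) * xd)) : ℂ) *
        (a (((2 : ℝ) ^ (2 * 0))⁻¹ • ξ) : ℂ) := by
      intro ξ
      rw [inv_smul_smul₀ hM.ne', norm_smul, Real.norm_eq_abs, abs_of_pos hM,
        real_inner_smul_left, real_inner_smul_right]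
      have e1 : (2:ℝ) ^ (2 * j) / ((2:ℝ) ^ (2 * j) * ‖ξ‖) = (2 : ℝ) ^ (2 * 0) / ‖ξ‖ := by
        rw [mul_zero, pow_zero, ← div_div, div_self hM.ne']
      have e2 : (2:ℝ) ^ (2 * j) * ‖ξ‖ * xd = ‖ξ‖ * ((2:ℝ) ^ (2 * j) * xd) := by ring
      rw [e1, e2]
      simp
    simp only [h2] at h
    unfold wavePacket
    rw [h]
    have e3 : |(((2:ℝ) ^ (2 * j)) ^ Module.finrank ℝ (EuclideanSpace ℝ (Fin (d - 1))))⁻¹|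
        = ((2:ℝ) ^ (2 * j * (d - 1)))⁻¹ := by
      rw [finrank_euclideanSpace_fin, ← pow_mul, abs_of_pos (by positivity)]
    rw [e3, Complex.real_smul]
    have e4 : (((2:ℝ) ^ (2 * j * (d - 1)) : ℝ) : ℂ) ≠ 0 := by
      exact_mod_cast (by positivity : (2:ℝ) ^ (2 * j * (d - 1)) ≠ 0)
    have e5 : 2 ^ j * t * 2 ^ 0 = t * 2 ^ j := by ring
    rw [e5]
    rw [Complex.ofReal_inv]
    set N : ℂ := (((2:ℝ) ^ (2 * j * (d - 1)) : ℝ) : ℂ)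
    have e6 : ∀ p e I : ℂ, p * e * I = N * (p * e * (N⁻¹ * I)) := by
      intro p e I
      field_simp
    exact e6 _ _ _
  · intro j t xd hxd x'
    have hM : (0:ℝ) < 2 ^ (2 * j) := by positivity
    set J : ℝ → EuclideanSpace ℝ (Fin (d - 1)) → ℂ := fun y x' =>
      ∫ ξ : EuclideanSpace ℝ (Fin (d - 1)),
      Complex.exp (Complex.I * (⟪x', ξ⟫ : ℝ)) *
        (B ((2 : ℝ) ^ (2 * j) / ‖ξ‖) (‖ξ‖ * y) : ℂ) *
        (a (((2 : ℝ) ^ (2 * j))⁻¹ • ξ) : ℂ) with hJ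
    obtain ⟨d1, d2, heq⟩ := core κ hκ _ hM ε hε hε1 a ha.continuous hac hasupp B hBcont hBC2 hODE
      J (fun _ _ => rfl) xd hxd x'
    set c : ℂ := (((2 * π) ^ ((1 : ℤ) - (d : ℤ)) : ℝ) : ℂ) with hc
    have hW : ∀ s y z, wavePacket d B a j s y z =
      c * Complex.exp (Complex.I * ((s * 2 ^ j : ℝ) : ℂ)) * J y z := fun _ _ _ => rfl
    simp only [hW]
    have ht : ∀ (b : ℂ) (s : ℝ), HasDerivAt
        (fun s : ℝ => b * Complex.exp (Complex.I * ((s * 2 ^ j : ℝ) : ℂ)) * J xd x')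
        (b * (Complex.I * 2 ^ j) * Complex.exp (Complex.I * ((s * 2 ^ j : ℝ) : ℂ)) * J xd x') s := by
      intro b s
      have h1 : HasDerivAt (fun s : ℝ => ((s * 2 ^ j : ℝ) : ℂ)) ((1 * 2 ^ j : ℝ) : ℂ) s :=
        ((hasDerivAt_id s).mul_const _).ofReal_comp
      have h2 := (((h1.const_mul Complex.I).cexp).const_mul b).mul_const (J xd x')
      refine h2.congr_deriv ?_
      push_cast
      ring
    have ht1 : (fun s => deriv (fun s' : ℝ =>
        c * Complex.exp (Complex.I * ((s' * 2 ^ j : ℝ) : ℂ)) * J xd x') s) = _ :=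
      funext fun s => (ht c s).deriv
    rw [ht1, (ht _ t).deriv]
    set q : ℂ := c * Complex.exp (Complex.I * ((t * 2 ^ j : ℝ) : ℂ)) with hq
    have hy1 : ∀ y, deriv (fun y => q * J y x') y = q * deriv (fun y => J y x') y :=
      fun y => deriv_const_mul_field _
    simp only [hy1]
    rw [deriv_const_mul_field]
    have hz1 : ∀ z v, fderiv ℝ (fun z => q * J xd z) z v = q * fderiv ℝ (fun z => J xd z) z v := by
      intro z v
      rw [fderiv_const_mul (d1 z)]; rfl
    have hz2 : ∀ i, fderiv ℝ (fun z => q * fderiv ℝ (fun z => J xd z) z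
        (EuclideanSpace.single i 1)) x' (EuclideanSpace.single i 1) =
        q * fderiv ℝ (fun z => fderiv ℝ (fun z => J xd z) z
        (EuclideanSpace.single i 1)) x' (EuclideanSpace.single i 1) := by
      intro i
      rw [fderiv_const_mul (d2 i x')]; rfl
    simp only [hz1, hz2]
    rw [← Finset.mul_sum]
    have hp : ((2 ^ (2 * j) : ℝ) : ℂ) = (2 ^ j) ^ 2 := by
      push_cast; rw [← pow_mul, mul_comm]
    rw [hp] at heq
    linear_combination (-q) * heq + (q * (2 ^ j) ^ 2 * J xd x') * Complex.I_sq

end
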